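/- Let f be an even log-concave probability density on ℝ^d, let X, Y be independent random vectors with density f, and let h be the density of (X+Y)/√2, so that h(x) = 2^{d/2}·∫_{ℝ^d} f(x−y)f(y) dy. Then h(0) = 2^{d/2}·∫_{ℝ^d} f(y)² dy ≥ 2^{−d/2}·f(0). -/

import Mathlib

open MeasureTheory Real

def IsDensity {d : ℕ} (f : EuclideanSpace ℝ (Fin d) → ℝ) : Prop :=
  (∀ x, 0 ≤ f x) ∧ Measurable f ∧ (∫ x, f x) = 1

def LogConcave {d : ℕ} (f : EuclideanSpace ℝ (Fin d) → ℝ) : Prop :=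
  ConvexOn ℝ Set.univ (fun x => -Real.log (f x))

/-
Write `φ = -log f`, which is minimal at the origin. Where `f` does not vanish, `y = (0 + 2y) / 2`
gives `f y ^ 2 ≥ f 0 * f (2y)`, and substituting `2y` for `y` costs the factor `2 ^ (-d)`.

Because `log 0 = 0`, convexity of `φ` still allows `f` to vanish on a non-null set, but only where
`φ` is minimal, and there `f` takes no values besides `0` and `f 0`, so that `f ^ 2 = f 0 * f`. To
treat the two regions separately, use polar coordinates: on each ray `φ` is constant up to some
radius `k`, possibly infinite, and strictly increasing afterwards. Beyond `k`, contracting towards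
`k` instead of the origin gives `f ((k + r) / 2) ^ 2 ≥ f 0 * f r` for almost every `r`, and the
weight `r ^ (d - 1)` loses no more than before, as `(k + r) / 2 ≥ r / 2`.
-/

open Set
open scoped ENNReal

theorem lintegral_eq_lintegral_sphere_lintegral_Ioi {E : Type*} [NormedAddCommGroup E]
    [NormedSpace ℝ E] [Nontrivial E] [FiniteDimensional ℝ E] [MeasurableSpace E] [BorelSpace E]
    (μ : Measure E) [μ.IsAddHaarMeasure] {F : E → ℝ≥0∞} (hF : AEMeasurable F μ) :
    ∫⁻ x, F x ∂μ = ∫⁻ θ : Metric.sphere (0 : E) 1, ∫⁻ r in Ioi (0 : ℝ),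
      ENNReal.ofReal (r ^ (Module.finrank ℝ E - 1)) * F (r • (θ : E)) ∂volume ∂μ.toSphere := by
  let e := homeomorphUnitSphereProd E
  let G : Metric.sphere (0 : E) 1 × Ioi (0 : ℝ) → ℝ≥0∞ := fun p => F ((p.2 : ℝ) • (p.1 : E))
  have he : MeasurePreserving e (μ.comap (↑)) _ := μ.measurePreserving_homeomorphUnitSphereProd
  have hGe : G ∘ e = F ∘ (↑) := by
    ext x
    exact congrArg (fun y : ({0}ᶜ : Set E) => F y) (e.symm_apply_apply x)
  have hG : AEMeasurable G (μ.toSphere.prod (.volumeIoiPow (Module.finrank ℝ E - 1))) := by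
    rw [← he.aemeasurable_comp_iff e.measurableEmbedding, hGe,
      ← aemeasurable_restrict_iff_comap_subtype (measurableSet_singleton _).compl]
    exact hF.restrict
  calc ∫⁻ x, F x ∂μ = ∫⁻ x : ({0}ᶜ : Set E), (G ∘ e) x ∂μ.comap (↑) := by
        conv_lhs => rw [← restrict_compl_singleton (μ := μ) 0]
        rw [hGe]
        exact (lintegral_subtype_comap (measurableSet_singleton _).compl F).symm
    _ = ∫⁻ θ, ∫⁻ r, G (θ, r) ∂.volumeIoiPow (Module.finrank ℝ E - 1) ∂μ.toSphere :=
        (he.lintegral_comp_emb e.measurableEmbedding G).trans (lintegral_prod G hG)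
    _ = _ := lintegral_congr fun θ => by
        rw [Measure.volumeIoiPow, lintegral_withDensity_eq_lintegral_mul_non_measurable _
          (by fun_prop) (.of_forall fun _ => ENNReal.ofReal_lt_top)]
        exact lintegral_subtype_comap measurableSet_Ioi
          fun r => ENNReal.ofReal (r ^ (Module.finrank ℝ E - 1)) * F (r • (θ : E))

theorem apply_zero_le_of_convexOn_of_even {E : Type*} [AddCommGroup E] [Module ℝ E] {φ : E → ℝ}
    (hφ : ConvexOn ℝ univ φ) (heven : ∀ x, φ (-x) = φ x) (x : E) : φ 0 ≤ φ x := by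
  have hmid := hφ.2 (mem_univ x) (mem_univ (-x)) (inv_nonneg.2 zero_le_two)
    (inv_nonneg.2 zero_le_two) (by norm_num)
  rw [heven, smul_neg, add_neg_cancel, smul_eq_mul] at hmid
  linarith

theorem eqOn_Ici_or_exists_eqOn_Icc_strictMonoOn_Ici {φ : ℝ → ℝ} {a : ℝ}
    (hφ : ConvexOn ℝ univ φ) (hmin : IsMinOn φ (Ici a) a) :
    EqOn φ (fun _ => φ a) (Ici a) ∨
      ∃ k, a ≤ k ∧ EqOn φ (fun _ => φ a) (Icc a k) ∧ StrictMonoOn φ (Ici k) := by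
  let S : Set ℝ := Ici a ∩ {r | φ r ≤ φ a}
  have haS : a ∈ S := ⟨self_mem_Ici, le_refl (φ a)⟩
  have hS_eq : ∀ r ∈ S, φ r = φ a := fun r hr => le_antisymm hr.2 (hmin hr.1)
  have hS_Icc : ∀ s ∈ S, Icc a s ⊆ S := fun s hs =>
    ((convex_Ici a).inter (by simpa using hφ.convex_le (φ a))).ordConnected.out haS hs
  by_cases hS_bdd : BddAbove S
  · right
    have hφ_cont : Continuous φ := continuousOn_univ.1 (hφ.continuousOn isOpen_univ)
    have hS_closed : IsClosed S := isClosed_Ici.inter (isClosed_le hφ_cont continuous_const)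
    have hkS : sSup S ∈ S := hS_closed.csSup_mem ⟨a, haS⟩ hS_bdd
    have hlt : ∀ r, sSup S < r → φ (sSup S) < φ r := fun r hr => by
      rw [hS_eq _ hkS]
      by_contra! hle
      exact hr.not_ge (le_csSup hS_bdd ⟨hkS.1.trans hr.le, hle⟩)
    refine ⟨sSup S, hkS.1, fun r hr => hS_eq r (hS_Icc _ hkS hr), fun r hr s _ hrs => ?_⟩
    rcases (mem_Ici.1 hr).eq_or_lt with rfl | hkr
    · exact hlt s hrs
    · have hmono := hφ.strictMonoOn (mem_univ (sSup S)) hkr (hlt r hkr)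
      exact hmono ⟨mem_univ r, self_mem_Ici⟩ ⟨mem_univ s, hrs.le⟩ hrs
  · left
    intro r hr
    obtain ⟨s, hs, hrs⟩ := not_bddAbove_iff.1 hS_bdd r
    exact hS_eq r (hS_Icc s hs ⟨hr, hrs.le⟩)

section ZerosAndLog

theorem sq_eq_mul_of_log_eq {x y : ℝ} (hx : 0 ≤ x) (hy : 0 < y) (h : log x = log y) :
    x ^ 2 = y * x := by
  rcases hx.eq_or_lt with rfl | hx
  · simp
  · rw [log_injOn_pos hx hy h, sq]

variable {α : Type*} [MeasurableSpace α] {μ : Measure α} {s : Set α} {u : α → ℝ}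

theorem ofReal_mul_setLIntegral_le_of_log_eq (hs : MeasurableSet s) (hu : ∀ x, 0 ≤ u x) {b c : ℝ}
    (hb : 0 < b) (hcb : c ≤ b) (hlog : ∀ x ∈ s, log (u x) = log b) (w : α → ℝ≥0∞) :
    ENNReal.ofReal c * ∫⁻ x in s, w x * ENNReal.ofReal (u x) ∂μ ≤
      ∫⁻ x in s, w x * ENNReal.ofReal (u x ^ 2) ∂μ := by
  rw [← lintegral_const_mul' _ _ ENNReal.ofReal_ne_top]
  refine setLIntegral_mono' hs fun x hx => ?_
  rw [mul_left_comm, sq_eq_mul_of_log_eq (hu x) hb (hlog x hx), ENNReal.ofReal_mul hb.le]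
  gcongr

theorem ae_restrict_eq_exp_log_of_injOn [NullSingletonClass μ] (hs : MeasurableSet s)
    (hu : ∀ x, 0 ≤ u x) (hinj : InjOn (fun x => log (u x)) s) :
    ∀ᵐ x ∂μ.restrict s, u x = exp (log (u x)) := by
  have hzeros : (s ∩ u ⁻¹' {0}).Subsingleton := fun x hx y hy =>
    hinj hx.1 hy.1 (by simp only [show u x = 0 from hx.2, show u y = 0 from hy.2])
  have hzeros_ae := measure_eq_zero_iff_ae_notMem.1 (hzeros.measure_zero μ)
  filter_upwards [ae_restrict_mem hs, ae_restrict_of_ae hzeros_ae] with x hx hzero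
  exact (exp_log ((hu x).lt_of_ne' fun h => hzero ⟨hx, h⟩)).symm

end ZerosAndLog

theorem lintegral_Ioi_eq_ofReal_mul_lintegral_Ioi_homothety (k : ℝ) {c : ℝ} (hc : 0 < c)
    (F : ℝ → ℝ≥0∞) :
    ∫⁻ r in Ioi k, F r = ENNReal.ofReal c * ∫⁻ r in Ioi k, F (k + c * (r - k)) := by
  have himage : (fun r => k + c * (r - k)) '' Ioi k = Ioi k := by
    ext x
    refine ⟨?_, fun hx => ⟨k + (x - k) / c, ?_, by field_simp; ring⟩⟩
    · rintro ⟨r, hr, rfl⟩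
      have := mul_pos hc (sub_pos.2 hr)
      simpa using this
    · have := div_pos (sub_pos.2 hx) hc
      simpa using this
  have hderiv : ∀ r ∈ Ioi k, HasDerivWithinAt (fun r => k + c * (r - k)) c (Ioi k) r :=
    fun r _ => by
      simpa using ((((hasDerivAt_id r).sub_const k).const_mul c).const_add k).hasDerivWithinAt
  have hinj : InjOn (fun r => k + c * (r - k)) (Ioi k) := fun r _ s _ hrs => by
    simpa [hc.ne'] using hrs
  conv_lhs => rw [← himage]
  rw [lintegral_image_eq_lintegral_abs_deriv_mul measurableSet_Ioi hderiv hinj, abs_of_pos hc,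
    lintegral_const_mul' _ _ ENNReal.ofReal_ne_top]

theorem lintegral_Ioi_pow_mul_exp_neg_le {φ : ℝ → ℝ} {k : ℝ} (hk : 0 ≤ k)
    (hφ : ConvexOn ℝ (Ici k) φ) (n : ℕ) :
    ENNReal.ofReal (2⁻¹ ^ (n + 1) * exp (-φ k)) *
        ∫⁻ r in Ioi k, ENNReal.ofReal (r ^ n) * ENNReal.ofReal (exp (-φ r)) ≤
      ∫⁻ r in Ioi k, ENNReal.ofReal (r ^ n) * ENNReal.ofReal (exp (-φ r) ^ 2) := by
  rw [lintegral_Ioi_eq_ofReal_mul_lintegral_Ioi_homothety k (inv_pos.2 two_pos)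
      fun r => ENNReal.ofReal (r ^ n) * ENNReal.ofReal (exp (-φ r) ^ 2),
    ← lintegral_const_mul' _ _ ENNReal.ofReal_ne_top,
    ← lintegral_const_mul' _ _ ENNReal.ofReal_ne_top]
  refine setLIntegral_mono' measurableSet_Ioi fun r (hr : k < r) => ?_
  set m := k + 2⁻¹ * (r - k) with hm
  have hr0 : 0 < r := hk.trans_lt hr
  have hrm : 2⁻¹ * r ≤ m := by linarith
  have hm0 : 0 ≤ m := by linarith
  have hmid : exp (-φ k) * exp (-φ r) ≤ exp (-φ m) ^ 2 := by
    have hconv := hφ.2 self_mem_Ici hr.le (inv_nonneg.2 zero_le_two)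
      (inv_nonneg.2 zero_le_two) (by norm_num)
    simp only [smul_eq_mul, show 2⁻¹ * k + 2⁻¹ * r = m by rw [hm]; ring] at hconv
    rw [← exp_add, ← exp_nat_mul, exp_le_exp]
    push_cast
    linarith
  rw [← ENNReal.ofReal_mul (by positivity), ← ENNReal.ofReal_mul (by positivity),
    ← ENNReal.ofReal_mul (pow_nonneg hm0 n), ← ENNReal.ofReal_mul (by positivity)]
  refine ENNReal.ofReal_le_ofReal ?_
  calc 2⁻¹ ^ (n + 1) * exp (-φ k) * (r ^ n * exp (-φ r))
      = 2⁻¹ * ((2⁻¹ * r) ^ n * (exp (-φ k) * exp (-φ r))) := by rw [mul_pow]; ring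
    _ ≤ 2⁻¹ * (m ^ n * exp (-φ m) ^ 2) := by gcongr

theorem lintegral_Ioi_pow_mul_le_of_strictMonoOn_neg_log {u : ℝ → ℝ} {k b : ℝ}
    (hu : ∀ r, 0 ≤ u r) (hk : 0 ≤ k) (hb : 0 < b) (hlog : log (u k) = log b)
    (hconv : ConvexOn ℝ (Ici k) fun r => -log (u r))
    (hmono : StrictMonoOn (fun r => -log (u r)) (Ioi k)) (n : ℕ) :
    ENNReal.ofReal (2⁻¹ ^ (n + 1) * b) *
        ∫⁻ r in Ioi k, ENNReal.ofReal (r ^ n) * ENNReal.ofReal (u r) ≤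
      ∫⁻ r in Ioi k, ENNReal.ofReal (r ^ n) * ENNReal.ofReal (u r ^ 2) := by
  have hexp : ∀ᵐ r ∂volume.restrict (Ioi k), u r = exp (log (u r)) :=
    ae_restrict_eq_exp_log_of_injOn measurableSet_Ioi hu fun r hr s hs hrs =>
      hmono.injOn hr hs (congrArg Neg.neg hrs)
  have hu_eq : ∫⁻ r in Ioi k, ENNReal.ofReal (r ^ n) * ENNReal.ofReal (u r) =
      ∫⁻ r in Ioi k, ENNReal.ofReal (r ^ n) * ENNReal.ofReal (exp (log (u r))) :=
    lintegral_congr_ae (hexp.mono fun r hr => by simp only [← hr])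
  have hu_sq_eq : ∫⁻ r in Ioi k, ENNReal.ofReal (r ^ n) * ENNReal.ofReal (u r ^ 2) =
      ∫⁻ r in Ioi k, ENNReal.ofReal (r ^ n) * ENNReal.ofReal (exp (log (u r)) ^ 2) :=
    lintegral_congr_ae (hexp.mono fun r hr => by simp only [← hr])
  rw [hu_eq, hu_sq_eq]
  simpa only [neg_neg, hlog, exp_log hb] using lintegral_Ioi_pow_mul_exp_neg_le hk hconv n

theorem lintegral_Ioi_pow_mul_le_of_convexOn_neg_log {u : ℝ → ℝ} (hu : ∀ r, 0 ≤ u r)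
    (hconv : ConvexOn ℝ univ fun r => -log (u r))
    (hmin : IsMinOn (fun r => -log (u r)) (Ici 0) 0) (n : ℕ) :
    ENNReal.ofReal (2⁻¹ ^ (n + 1) * u 0) *
        ∫⁻ r in Ioi 0, ENNReal.ofReal (r ^ n) * ENNReal.ofReal (u r) ≤
      ∫⁻ r in Ioi 0, ENNReal.ofReal (r ^ n) * ENNReal.ofReal (u r ^ 2) := by
  rcases (hu 0).eq_or_lt with hu0 | hu0
  · simp [← hu0]
  have hle : 2⁻¹ ^ (n + 1) * u 0 ≤ u 0 :=
    mul_le_of_le_one_left hu0.le (pow_le_one₀ (by norm_num) (by norm_num))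
  rcases eqOn_Ici_or_exists_eqOn_Icc_strictMonoOn_Ici hconv hmin with
    hconst | ⟨k, hk, hconst, hmono⟩
  · exact ofReal_mul_setLIntegral_le_of_log_eq measurableSet_Ioi hu hu0 hle
      (fun r hr => neg_inj.1 (hconst (Ioi_subset_Ici_self hr))) _
  rw [← Ioc_union_Ioi_eq_Ioi hk, lintegral_union measurableSet_Ioi (Ioc_disjoint_Ioi le_rfl),
    lintegral_union measurableSet_Ioi (Ioc_disjoint_Ioi le_rfl), mul_add]
  refine add_le_add ?_ ?_
  · exact ofReal_mul_setLIntegral_le_of_log_eq measurableSet_Ioc hu hu0 hle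
      (fun r hr => neg_inj.1 (hconst (Ioc_subset_Icc_self hr))) _
  · exact lintegral_Ioi_pow_mul_le_of_strictMonoOn_neg_log hu hk hu0
      (neg_inj.1 (hconst (right_mem_Icc.2 hk))) (hconv.subset (subset_univ _) (convex_Ici k))
      (hmono.mono Ioi_subset_Ici_self) n

section FiniteDimensional

variable {E : Type*} [NormedAddCommGroup E] [NormedSpace ℝ E] [FiniteDimensional ℝ E]
  [MeasurableSpace E] [BorelSpace E] (μ : Measure E) [μ.IsAddHaarMeasure] {f : E → ℝ}

theorem ofReal_mul_lintegral_le_lintegral_sq_of_convexOn_neg_log (hf : ∀ x, 0 ≤ f x)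
    (hfm : AEMeasurable f μ) (hconv : ConvexOn ℝ univ fun x => -log (f x))
    (hmin : ∀ x, -log (f 0) ≤ -log (f x)) :
    ENNReal.ofReal (2⁻¹ ^ Module.finrank ℝ E * f 0) * ∫⁻ x, ENNReal.ofReal (f x) ∂μ ≤
      ∫⁻ x, ENNReal.ofReal (f x ^ 2) ∂μ := by
  rcases subsingleton_or_nontrivial E with _ | _
  · rw [← lintegral_const_mul' _ _ ENNReal.ofReal_ne_top]
    refine lintegral_mono fun x => ?_
    rw [← ENNReal.ofReal_mul (mul_nonneg (by positivity) (hf 0))]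
    simp [Subsingleton.elim x 0, sq, Module.finrank_zero_of_subsingleton]
  rw [lintegral_eq_lintegral_sphere_lintegral_Ioi μ hfm.ennreal_ofReal,
    lintegral_eq_lintegral_sphere_lintegral_Ioi μ (hfm.pow_const 2).ennreal_ofReal,
    ← lintegral_const_mul' _ _ ENNReal.ofReal_ne_top]
  refine lintegral_mono fun θ => ?_
  have hray := lintegral_Ioi_pow_mul_le_of_convexOn_neg_log (u := fun r => f (r • (θ : E)))
    (fun r => hf _) (hconv.comp_linearMap (LinearMap.toSpanSingleton ℝ E θ))
    (fun r _ => by simpa using hmin (r • (θ : E))) (Module.finrank ℝ E - 1)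
  simpa [Nat.sub_add_cancel (Module.finrank_pos (R := ℝ) (M := E))] using hray

theorem mul_integral_le_integral_sq_of_convexOn_neg_log (hf : ∀ x, 0 ≤ f x)
    (hfi : Integrable f μ) (hconv : ConvexOn ℝ univ fun x => -log (f x))
    (heven : ∀ x, f (-x) = f x) :
    2⁻¹ ^ Module.finrank ℝ E * f 0 * ∫ x, f x ∂μ ≤ ∫ x, f x ^ 2 ∂μ := by
  have hmin : ∀ x, -log (f 0) ≤ -log (f x) :=
    apply_zero_le_of_convexOn_of_even hconv fun x => by rw [heven]
  rcases (hf 0).eq_or_lt with hf0 | hf0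
  · simpa [← hf0] using integral_nonneg fun x => sq_nonneg (f x)
  have hle : ∀ x, f x ≤ f 0 := fun x => by
    rcases (hf x).eq_or_lt with hx | hx
    · exact hx ▸ hf0.le
    · exact (log_le_log_iff hx hf0).1 (neg_le_neg_iff.1 (hmin x))
  have hsq : Integrable (fun x => f x ^ 2) μ := by
    simpa only [sq] using hfi.mul_bdd hfi.aestronglyMeasurable
      (.of_forall fun x => (norm_of_nonneg (hf x)).trans_le (hle x))
  rw [← ENNReal.ofReal_le_ofReal_iff (integral_nonneg fun x => sq_nonneg (f x)),
    ENNReal.ofReal_mul (by positivity),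
    ofReal_integral_eq_lintegral_ofReal hfi (.of_forall hf),
    ofReal_integral_eq_lintegral_ofReal hsq (.of_forall fun x => sq_nonneg (f x))]
  exact ofReal_mul_lintegral_le_lintegral_sq_of_convexOn_neg_log μ hf hfi.aemeasurable hconv hmin

theorem self_convolution_at_zero_ge_general (hf : ∀ x, 0 ≤ f x) (hfi : Integrable f μ)
    (hconv : ConvexOn ℝ univ fun x => -log (f x)) (heven : ∀ x, f (-x) = f x) (h : E → ℝ)
    (hh : ∀ x, h x = (2 : ℝ) ^ ((Module.finrank ℝ E : ℝ) / 2) * ∫ y, f (x - y) * f y ∂μ) :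
    h 0 = (2 : ℝ) ^ ((Module.finrank ℝ E : ℝ) / 2) * ∫ y, f y ^ 2 ∂μ ∧
      (2 : ℝ) ^ (-(Module.finrank ℝ E : ℝ) / 2) * (f 0 * ∫ y, f y ∂μ) ≤ h 0 := by
  have h_zero : h 0 = (2 : ℝ) ^ ((Module.finrank ℝ E : ℝ) / 2) * ∫ y, f y ^ 2 ∂μ := by
    simp only [hh, zero_sub, heven, sq]
  have hpow : (2 : ℝ) ^ (-(Module.finrank ℝ E : ℝ) / 2) =
      (2 : ℝ) ^ ((Module.finrank ℝ E : ℝ) / 2) * 2⁻¹ ^ Module.finrank ℝ E := by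
    rw [inv_pow, ← rpow_natCast, ← rpow_neg two_pos.le, ← rpow_add two_pos]
    ring_nf
  refine ⟨h_zero, ?_⟩
  rw [h_zero, hpow, mul_assoc, ← mul_assoc _ (f 0)]
  gcongr
  exact mul_integral_le_integral_sq_of_convexOn_neg_log μ hf hfi hconv heven

end FiniteDimensional

/-- For an even log-concave density `f` on `ℝ^d`, the density
`h(x) = 2^{d/2} ∫ f(x-y) f(y) dy` of `(X+Y)/√2` satisfies
`h(0) = 2^{d/2} ∫ f² ≥ 2^{-d/2} f(0)`. -/
theorem self_convolution_at_zero_ge {d : ℕ}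
    (f : EuclideanSpace ℝ (Fin d) → ℝ)
    (hf : IsDensity f) (hlc : LogConcave f)
    (heven : ∀ x, f (-x) = f x)
    (h : EuclideanSpace ℝ (Fin d) → ℝ)
    (hh : ∀ x, h x = (2:ℝ) ^ ((d:ℝ) / 2) * ∫ y, f (x - y) * f y) :
    h 0 = (2:ℝ) ^ ((d:ℝ) / 2) * (∫ y, f y ^ 2) ∧
      (2:ℝ) ^ (-(d:ℝ) / 2) * f 0 ≤ h 0 := by
  obtain ⟨hf_nonneg, -, hf_int⟩ := hf
  have hfi : Integrable f := .of_integral_ne_zero (by simp [hf_int])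
  simpa [hf_int] using
    self_convolution_at_zero_ge_general volume hf_nonneg hfi hlc heven h (by simpa using hh)
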